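/- (Almost sure convergence of Q-learning with Markovian samples.) Consider a finite MDP with state space S, action space A, reward r, transition kernel p, and discount γ ∈ [0,1). Fix a behavior policy π such that the induced Markov chain {(S_t, A_t)} on S × A is irreducible and aperiodic, and let the trajectory probability measure be constructed via the Ionescu–Tulcea theorem. Let the step sizes be α_t = 1/(t+2)^ν with ν ∈ (2/3, 1), and let the Q-learning iterates be q_0 given and q_{t+1}(s,a) = q_t(s,a) + α_t·(r(S_t,A_t) + γ·max_b q_t(S_{t+1}, b) − q_t(S_t, A_t))·𝟙[(s,a) = (S_t, A_t)]. Then q_t → q* almost surely, where q* is the optimal action-value function (the unique fixed point of the Bellman optimality operator). -/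

import Mathlib

/-!
The error `D t = q t - q*` satisfies an averaging recursion: its coordinate at the visited pair
moves a fraction `α t` of the way towards that of `T* (q t) - T* q*`, whose sup norm is at most
`γ * ‖D t‖`, up to noise equal to `α t` times a martingale difference. The iterates stay bounded and
the step sizes are square-summable, so the noise forms an almost surely convergent series, whose
contribution to the averaging dies out.

Every pair `y` receives infinite total step size: with `N` larger than the times needed to reach
`y`, the potential `V x = ∑ m < N, ∑ k < m, (P ^ k) x y` has drift
`P V x - V x = ∑ m < N, (P ^ m) x y - N * 𝟙[x = y] ≥ δ - N * 𝟙[x = y]` for some `δ > 0`. Summing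
`α t` times the increments of `V` along the chain by parts, the boundedness of `V` and the
convergence of the noise give `N * ∑ α t * 𝟙[X t = y] ≥ δ * ∑ α t - O(1)`, which diverges.

Each averaging phase then improves an eventual bound `‖D t‖ ≤ C` to `‖D t‖ ≤ γ * C + ε`.
-/

open Finset Matrix MeasureTheory Filter

/-- The set of return times of state `i` under the stochastic matrix `P`. -/
def returnTimes {Y : Type*} [Fintype Y] [DecidableEq Y] (P : Matrix Y Y ℝ) (i : Y) : Set ℕ :=
  {n | 1 ≤ n ∧ 0 < (P ^ n) i i}

variable {S A : Type*} [Fintype S] [Fintype A] [Nonempty S] [Nonempty A]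

/-- The Bellman optimality operator of a finite MDP. -/
noncomputable def bellmanOpt (r : S × A → ℝ) (p : S × A → S → ℝ) (γ : ℝ)
    (q : S × A → ℝ) : S × A → ℝ :=
  fun y => r y + γ * ∑ s', p y s' * ⨆ a', q (s', a')

lemma abs_convexComb_le {a : ℝ} (ha : a ∈ Set.Icc 0 1) (u v : ℝ) :
    |(1 - a) * u + a * v| ≤ (1 - a) * |u| + a * |v| := by
  refine (abs_add_le _ _).trans_eq ?_
  rw [abs_mul, abs_mul, abs_of_nonneg ha.1, abs_of_nonneg (sub_nonneg.2 ha.2)]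

lemma abs_sum_mul_le_of_sum_eq_one {X : Type*} [Fintype X] {w f : X → ℝ} {C : ℝ}
    (hw : ∀ x, 0 ≤ w x) (hw1 : ∑ x, w x = 1) (hf : ∀ x, |f x| ≤ C) :
    |∑ x, w x * f x| ≤ C :=
  calc |∑ x, w x * f x| ≤ ∑ x, |w x * f x| := abs_sum_le_sum_abs _ _
    _ ≤ ∑ x, w x * C := sum_le_sum fun x _ => by
        rw [abs_mul, abs_of_nonneg (hw x)]
        exact mul_le_mul_of_nonneg_left (hf x) (hw x)
    _ = C := by rw [← sum_mul, hw1, one_mul]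

lemma abs_iSup_sub_iSup_le_norm_sub {X : Type*} [Fintype X] (f g : X → ℝ) :
    |(⨆ x, f x) - ⨆ x, g x| ≤ ‖f - g‖ := by
  have iSup_le_add (f g : X → ℝ) : (⨆ x, f x) ≤ (⨆ x, g x) + ‖f - g‖ := by
    rcases isEmpty_or_nonempty X with hX | hX
    · simp [Real.iSup_of_isEmpty]
    · refine ciSup_le fun x => ?_
      have hfg : f x - g x ≤ ‖f - g‖ := (le_abs_self _).trans (norm_le_pi_norm (f - g) x)
      linarith [le_ciSup (Set.finite_range g).bddAbove x]
  have hfg := iSup_le_add f g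
  have hgf := iSup_le_add g f
  rw [norm_sub_rev] at hgf
  exact abs_le.2 ⟨by linarith, by linarith⟩

/-! ### Averaging recursions -/

lemma eventually_le_add_of_averaging {a x : ℕ → ℝ} {c ε : ℝ} (hε : 0 < ε) (ha1 : ∀ t, a t ≤ 1)
    (ha : Tendsto (fun n => ∑ t ∈ range n, a t) atTop atTop)
    (hx : ∀ᶠ t in atTop, x (t + 1) ≤ (1 - a t) * x t + a t * c) :
    ∀ᶠ t in atTop, x t ≤ c + ε := by
  obtain ⟨T, hT⟩ := eventually_atTop.1 hx
  -- Each step multiplies the excess over `c` by at most `1 - a t ≤ exp (-a t)`.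
  let excess (t : ℕ) : ℝ := max (x t - c) 0
  have excess_nonneg (t) : 0 ≤ excess t := le_max_right _ _
  have excess_succ (n) (hn : T ≤ n) : excess (n + 1) ≤ Real.exp (-a n) * excess n := by
    have h1a : 0 ≤ 1 - a n := sub_nonneg.2 (ha1 n)
    calc excess (n + 1) ≤ (1 - a n) * excess n := by
          refine max_le ?_ (mul_nonneg h1a (excess_nonneg n))
          have := mul_le_mul_of_nonneg_left (le_max_left (x n - c) 0) h1a
          linarith [hT n hn]
      _ ≤ Real.exp (-a n) * excess n :=
          mul_le_mul_of_nonneg_right (Real.one_sub_le_exp_neg _) (excess_nonneg n)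
  have excess_le (n) (hn : T ≤ n) : excess n ≤
      Real.exp (-∑ t ∈ range n, a t) * (Real.exp (∑ t ∈ range T, a t) * excess T) := by
    induction n, hn using Nat.le_induction with
    | base => rw [← mul_assoc, ← Real.exp_add]; simp
    | succ n hn ih =>
      rw [sum_range_succ, neg_add_rev, Real.exp_add, mul_assoc]
      exact (excess_succ n hn).trans (mul_le_mul_of_nonneg_left ih (Real.exp_nonneg _))
  have excess_bound_tendsto : Tendsto (fun n => Real.exp (-∑ t ∈ range n, a t) *
      (Real.exp (∑ t ∈ range T, a t) * excess T)) atTop (nhds 0) := by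
    simpa using (Real.tendsto_exp_neg_atTop_nhds_zero.comp ha).mul_const _
  filter_upwards [excess_bound_tendsto.eventually_lt_const hε, eventually_ge_atTop T] with n hn hTn
  linarith [excess_le n hTn, le_max_left (x n - c) 0]

lemma eventually_abs_le_add_of_averaging {a b x : ℕ → ℝ} {c ε : ℝ} (hε : 0 < ε)
    (ha01 : ∀ t, a t ∈ Set.Icc 0 1)
    (ha : Tendsto (fun n => ∑ t ∈ range n, a t) atTop atTop)
    (hb : ∀ᶠ t in atTop, |b t| ≤ c)
    (hx : ∀ t, x (t + 1) = (1 - a t) * x t + a t * b t) :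
    ∀ᶠ t in atTop, |x t| ≤ c + ε := by
  refine eventually_le_add_of_averaging hε (fun t => (ha01 t).2) ha ?_
  filter_upwards [hb] with t hbt
  rw [hx]
  exact (abs_convexComb_le (ha01 t) _ _).trans
    (add_le_add_right (mul_le_mul_of_nonneg_left hbt (ha01 t).1) _)

/-- The response of the averaging recursion with steps `a`, started at `0`, to the additive
noise `e`. -/
def averagedNoise (a e : ℕ → ℝ) : ℕ → ℝ
  | 0 => 0
  | t + 1 => (1 - a t) * averagedNoise a e t + e t

lemma tendsto_averagedNoise {a e : ℕ → ℝ} {l : ℝ} (ha01 : ∀ t, a t ∈ Set.Icc 0 1)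
    (ha : Tendsto (fun n => ∑ t ∈ range n, a t) atTop atTop)
    (he : Tendsto (fun n => ∑ t ∈ range n, e t) atTop (nhds l)) :
    Tendsto (averagedNoise a e) atTop (nhds 0) := by
  -- Adding the tail of the series of `e` turns the noise into an averaging against that tail.
  let tail (n : ℕ) : ℝ := l - ∑ t ∈ range n, e t
  have tail_tendsto : Tendsto tail atTop (nhds 0) := by simpa using he.const_sub l
  have averaging (t) : averagedNoise a e (t + 1) + tail (t + 1) =
      (1 - a t) * (averagedNoise a e t + tail t) + a t * tail t := by
    simp only [averagedNoise, tail, sum_range_succ]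
    ring
  suffices h : Tendsto (fun t => averagedNoise a e t + tail t) atTop (nhds 0) by
    simpa using h.sub tail_tendsto
  refine Metric.tendsto_nhds.2 fun ε hε => ?_
  have tail_small : ∀ᶠ t in atTop, |tail t| ≤ ε / 3 := by
    have := tail_tendsto.abs
    rw [abs_zero] at this
    exact this.eventually_le_const (by positivity)
  filter_upwards [eventually_abs_le_add_of_averaging (x := fun t => averagedNoise a e t + tail t)
    (show 0 < ε / 3 by positivity) ha01 ha tail_small averaging] with t ht
  rw [Real.dist_eq, sub_zero]
  linarith

/-! ### Asynchronous contractions -/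

section AsyncContraction

variable {Y : Type*} [Fintype Y] {γ : ℝ} {a h e D : ℕ → Y → ℝ}

lemma eventually_norm_le_of_async_contraction {C ε : ℝ} (hγ0 : 0 ≤ γ)
    (hε : 0 < ε) (ha01 : ∀ t y, a t y ∈ Set.Icc 0 1)
    (ha : ∀ y, Tendsto (fun n => ∑ t ∈ range n, a t y) atTop atTop)
    (he : ∀ y, ∃ l, Tendsto (fun n => ∑ t ∈ range n, e t y) atTop (nhds l))
    (hh : ∀ t, ‖h t‖ ≤ γ * ‖D t‖)
    (hD : ∀ t y, D (t + 1) y = (1 - a t y) * D t y + a t y * h t y + e t y)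
    (hC : ∀ᶠ t in atTop, ‖D t‖ ≤ C) :
    ∀ᶠ t in atTop, ‖D t‖ ≤ γ * C + ε := by
  let W (y : Y) : ℕ → ℝ := averagedNoise (a · y) (e · y)
  have noiseless_averaging (y t) :
      D (t + 1) y - W y (t + 1) = (1 - a t y) * (D t y - W y t) + a t y * h t y := by
    simp only [hD, W, averagedNoise]
    ring
  have contracted_le (y) : ∀ᶠ t in atTop, |h t y| ≤ γ * C := by
    filter_upwards [hC] with t ht
    exact (norm_le_pi_norm (h t) y).trans ((hh t).trans (mul_le_mul_of_nonneg_left ht hγ0))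
  have noiseless_le (y) : ∀ᶠ t in atTop, |D t y - W y t| ≤ γ * C + ε / 2 :=
    eventually_abs_le_add_of_averaging (half_pos hε) (ha01 · y) (ha y) (contracted_le y)
      (noiseless_averaging y)
  have noise_le (y) : ∀ᶠ t in atTop, |W y t| ≤ ε / 2 := by
    obtain ⟨l, hl⟩ := he y
    have := (tendsto_averagedNoise (ha01 · y) (ha y) hl).abs
    rw [abs_zero] at this
    exact this.eventually_le_const (half_pos hε)
  filter_upwards [hC, eventually_all.2 noiseless_le, eventually_all.2 noise_le] with t hCt hDW hW
  have hγC : 0 ≤ γ * C := mul_nonneg hγ0 ((norm_nonneg _).trans hCt)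
  refine (pi_norm_le_iff_of_nonneg (add_nonneg hγC hε.le)).2 fun y => ?_
  rw [Real.norm_eq_abs]
  have triangle := abs_add_le (D t y - W y t) (W y t)
  rw [sub_add_cancel] at triangle
  linarith [hDW y, hW y]

lemma tendsto_zero_of_async_contraction {B : ℝ} (hγ0 : 0 ≤ γ) (hγ1 : γ < 1)
    (ha01 : ∀ t y, a t y ∈ Set.Icc 0 1)
    (ha : ∀ y, Tendsto (fun n => ∑ t ∈ range n, a t y) atTop atTop)
    (he : ∀ y, ∃ l, Tendsto (fun n => ∑ t ∈ range n, e t y) atTop (nhds l))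
    (hh : ∀ t, ‖h t‖ ≤ γ * ‖D t‖)
    (hD : ∀ t y, D (t + 1) y = (1 - a t y) * D t y + a t y * h t y + e t y)
    (hB : ∀ t, ‖D t‖ ≤ B) :
    Tendsto D atTop (nhds 0) := by
  have geometric_bound (k : ℕ) (ε : ℝ) (hε : 0 < ε) : ∀ᶠ t in atTop, ‖D t‖ ≤ γ ^ k * B + ε := by
    induction k generalizing ε with
    | zero => exact Eventually.of_forall fun t => by linarith [hB t]
    | succ k ih =>
      have := eventually_norm_le_of_async_contraction hγ0
        (mul_pos (sub_pos.2 hγ1) hε) ha01 ha he hh hD (ih ε hε)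
      filter_upwards [this] with t ht
      exact ht.trans_eq (by ring)
  have geometric_tendsto : Tendsto (fun k => γ ^ k * B) atTop (nhds 0) := by
    simpa using (tendsto_pow_atTop_nhds_zero_of_lt_one hγ0 hγ1).mul_const B
  refine tendsto_zero_iff_norm_tendsto_zero.2 (Metric.tendsto_nhds.2 fun ε hε => ?_)
  obtain ⟨k, hk⟩ := (geometric_tendsto.eventually_lt_const (half_pos hε)).exists
  filter_upwards [geometric_bound k (ε / 2) (half_pos hε)] with t ht
  rw [dist_zero_right, norm_norm]
  linarith

end AsyncContraction

/-! ### Martingales with square-summable increments -/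

section MartingaleDifference

variable {Ω : Type*} {m : MeasurableSpace Ω} {μ : Measure Ω} [IsFiniteMeasure μ]

lemma integral_mul_eq_zero_of_condExp_eq_zero {m' : MeasurableSpace Ω} (hm : m' ≤ m)
    {f g : Ω → ℝ} (hf : StronglyMeasurable[m'] f) (hfg : Integrable (f * g) μ)
    (hg : Integrable g μ) (hg0 : μ[g | m'] =ᵐ[μ] 0) : ∫ ω, (f * g) ω ∂μ = 0 := by
  rw [← integral_condExp hm]
  refine integral_eq_zero_of_ae ?_
  filter_upwards [condExp_mul_of_stronglyMeasurable_left hf hfg hg, hg0] with ω hω hgω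
  simp [hω, hgω]

variable {ℱ : Filtration ℕ m} {ξ : ℕ → Ω → ℝ}

lemma stronglyAdapted_sum_range (hξ : ∀ t, StronglyMeasurable[ℱ (t + 1)] (ξ t)) :
    StronglyAdapted ℱ fun n => ∑ t ∈ range n, ξ t := fun n =>
  stronglyMeasurable_sum (range n) fun t ht =>
    (hξ t).mono (ℱ.mono (Nat.succ_le_of_lt (mem_range.1 ht)))

lemma martingale_sum_range (hξ : ∀ t, StronglyMeasurable[ℱ (t + 1)] (ξ t))
    (hint : ∀ t, Integrable (ξ t) μ) (hcond : ∀ t, μ[ξ t | ℱ t] =ᵐ[μ] 0) :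
    Martingale (fun n => ∑ t ∈ range n, ξ t) ℱ μ :=
  martingale_of_condExp_sub_eq_zero_nat (stronglyAdapted_sum_range hξ)
    (fun n => integrable_finsetSum' _ fun t _ => hint t)
    fun n => by simpa only [sum_range_succ, add_sub_cancel_left] using hcond n

lemma integral_sum_range_sq (hξ : ∀ t, StronglyMeasurable[ℱ (t + 1)] (ξ t))
    (hL2 : ∀ t, MemLp (ξ t) 2 μ) (hcond : ∀ t, μ[ξ t | ℱ t] =ᵐ[μ] 0) (n : ℕ) :
    ∫ ω, (∑ t ∈ range n, ξ t) ω ^ 2 ∂μ = ∑ t ∈ range n, ∫ ω, ξ t ω ^ 2 ∂μ := by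
  induction n with
  | zero => simp
  | succ n ih =>
    set M := ∑ t ∈ range n, ξ t with hM
    have hM2 : MemLp M 2 μ := memLp_finsetSum' _ fun t _ => hL2 t
    have hMξ : Integrable (M * ξ n) μ := hM2.integrable_mul (hL2 n)
    have orthogonal : ∫ ω, (M * ξ n) ω ∂μ = 0 :=
      integral_mul_eq_zero_of_condExp_eq_zero (ℱ.le n) (stronglyAdapted_sum_range hξ n) hMξ
        ((hL2 n).integrable one_le_two) (hcond n)
    have expand (ω) : (M + ξ n) ω ^ 2 = M ω ^ 2 + 2 * (M * ξ n) ω + ξ n ω ^ 2 := by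
      simp only [Pi.add_apply, Pi.mul_apply]
      ring
    have cross_integrable : Integrable (fun ω => M ω ^ 2 + 2 * (M * ξ n) ω) μ :=
      hM2.integrable_sq.add (hMξ.const_mul 2)
    simp_rw [sum_range_succ, ← hM, expand]
    rw [integral_add cross_integrable (hL2 n).integrable_sq,
      integral_add hM2.integrable_sq (hMξ.const_mul 2), integral_const_mul, orthogonal, ih]
    ring

lemma eLpNorm_one_le_of_integral_sq_le {f : Ω → ℝ} {R : ℝ} (hf : MemLp f 2 μ)
    (hR : ∫ ω, f ω ^ 2 ∂μ ≤ R) : eLpNorm f 1 μ ≤ ENNReal.ofReal (μ.real Set.univ + R) := by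
  have hf1 : Integrable f μ := hf.integrable one_le_two
  rw [eLpNorm_one_eq_lintegral_enorm, ← ofReal_integral_norm_eq_lintegral_enorm hf1]
  refine ENNReal.ofReal_le_ofReal ?_
  calc ∫ ω, ‖f ω‖ ∂μ ≤ ∫ ω, (1 + f ω ^ 2) ∂μ :=
        integral_mono hf1.norm ((integrable_const 1).add hf.integrable_sq) fun ω => by
          rw [Real.norm_eq_abs, ← sq_abs]
          nlinarith [sq_nonneg (|f ω| - 1), abs_nonneg (f ω)]
    _ = μ.real Set.univ + ∫ ω, f ω ^ 2 ∂μ := by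
        rw [integral_add (integrable_const 1) hf.integrable_sq, integral_const, smul_eq_mul,
          mul_one]
    _ ≤ μ.real Set.univ + R := by gcongr

lemma ae_exists_tendsto_sum_of_condExp_eq_zero
    (hξ : ∀ t, StronglyMeasurable[ℱ (t + 1)] (ξ t)) (hL2 : ∀ t, MemLp (ξ t) 2 μ)
    (hcond : ∀ t, μ[ξ t | ℱ t] =ᵐ[μ] 0) (hsum : Summable fun t => ∫ ω, ξ t ω ^ 2 ∂μ) :
    ∀ᵐ ω ∂μ, ∃ l, Tendsto (fun n => ∑ t ∈ range n, ξ t ω) atTop (nhds l) := by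
  have L1_bounded (n) : eLpNorm (∑ t ∈ range n, ξ t) 1 μ ≤
      ENNReal.ofReal (μ.real Set.univ + ∑' t, ∫ ω, ξ t ω ^ 2 ∂μ) := by
    refine eLpNorm_one_le_of_integral_sq_le (memLp_finsetSum' _ fun t _ => hL2 t) ?_
    rw [integral_sum_range_sq hξ hL2 hcond]
    exact hsum.sum_le_tsum _ fun t _ => integral_nonneg fun ω => sq_nonneg _
  have hM := martingale_sum_range hξ (fun t => (hL2 t).integrable one_le_two) hcond
  simpa only [Finset.sum_apply] using hM.submartingale.exists_ae_tendsto_of_bdd L1_bounded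

end MartingaleDifference

/-! ### Step sizes -/

/-- Nonincreasing step sizes in `[0, 1]` satisfying the Robbins–Monro conditions: their sum
diverges while the sum of their squares converges. -/
structure IsRobbinsMonro (α : ℕ → ℝ) : Prop where
  nonneg : ∀ t, 0 ≤ α t
  le_one : ∀ t, α t ≤ 1
  antitone : Antitone α
  tendsto_sum : Tendsto (fun n => ∑ t ∈ range n, α t) atTop atTop
  summable_sq : Summable fun t => α t ^ 2

lemma isRobbinsMonro_one_div_rpow {ν : ℝ} (hν : ν ∈ Set.Ioc (1 / 2) 1) {k : ℕ} (hk : 1 ≤ k) :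
    IsRobbinsMonro fun t : ℕ => 1 / ((t : ℝ) + k) ^ ν := by
  have hν0 : 0 ≤ ν := by linarith [hν.1]
  have hk1 : (1 : ℝ) ≤ k := Nat.one_le_cast.2 hk
  have shift (c : ℝ) : (fun t : ℕ => 1 / ((t + k : ℕ) : ℝ) ^ c) =
      fun t : ℕ => 1 / ((t : ℝ) + k) ^ c := by simp only [Nat.cast_add]
  constructor
  case nonneg => intro t; positivity
  case le_one =>
    intro t
    exact div_le_one_of_le₀ (Real.one_le_rpow (by linarith [t.cast_nonneg (α := ℝ)]) hν0)
      (by positivity)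
  case antitone =>
    intro s t hst
    have : (s : ℝ) ≤ t := Nat.cast_le.2 hst
    dsimp only
    gcongr
  case tendsto_sum =>
    rw [← not_summable_iff_tendsto_nat_atTop_of_nonneg fun t => by positivity, ← shift,
      summable_nat_add_iff k (f := fun t : ℕ => 1 / (t : ℝ) ^ ν), Real.summable_one_div_nat_rpow]
    exact not_lt.2 hν.2
  case summable_sq =>
    have square (t : ℕ) : (1 / ((t : ℝ) + k) ^ ν) ^ 2 = 1 / ((t : ℝ) + k) ^ (ν * 2) := by
      rw [_root_.one_div_pow, ← Real.rpow_mul_natCast (by positivity), Nat.cast_ofNat]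
    simp_rw [square]
    rw [← shift, summable_nat_add_iff k (f := fun t : ℕ => 1 / (t : ℝ) ^ (ν * 2)),
      Real.summable_one_div_nat_rpow]
    linarith [hν.1]

lemma sum_mul_sub_le_of_antitone {α v : ℕ → ℝ} {B : ℝ} (hα0 : ∀ t, 0 ≤ α t) (hα : Antitone α)
    (hv : ∀ t, v t ∈ Set.Icc 0 B) (n : ℕ) :
    ∑ t ∈ range n, α t * (v (t + 1) - v t) ≤ α 0 * B := by
  suffices h : ∑ t ∈ range n, α t * (v (t + 1) - v t) ≤ α 0 * B - α n * (B - v n) from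
    h.trans (sub_le_self _ (mul_nonneg (hα0 n) (sub_nonneg.2 (hv n).2)))
  induction n with
  | zero =>
    rw [range_zero, sum_empty]
    linarith [mul_nonneg (hα0 0) (hv 0).1]
  | succ n ih =>
    rw [sum_range_succ]
    linarith [mul_le_mul_of_nonneg_right (hα n.le_succ) (sub_nonneg.2 (hv (n + 1)).2)]

/-! ### Finite Markov chains -/

lemma abs_mulVec_le {Y : Type*} [Fintype Y] [DecidableEq Y] {P : Matrix Y Y ℝ}
    (hP : P ∈ rowStochastic ℝ Y) {f : Y → ℝ} {B : ℝ} (hf : ∀ y, |f y| ≤ B) (x : Y) :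
    |(P *ᵥ f) x| ≤ B :=
  abs_sum_mul_le_of_sum_eq_one (fun _ => nonneg_of_mem_rowStochastic hP)
    (sum_row_of_mem_rowStochastic hP x) hf

lemma exists_drift_function {Y : Type*} [Fintype Y] [DecidableEq Y] {P : Matrix Y Y ℝ}
    (hP : ∀ x x', 0 ≤ P x x') {y : Y} (hy : ∀ x, ∃ n, 0 < (P ^ n) x y) :
    ∃ (V : Y → ℝ) (δ K : ℝ), 0 < δ ∧ 0 < K ∧ (∀ x, 0 ≤ V x) ∧
      ∀ x, δ - K * (if y = x then 1 else 0) ≤ (P *ᵥ V) x - V x := by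
  choose n hn using hy
  have : Nonempty Y := ⟨y⟩
  obtain ⟨x₀, hx₀⟩ := Finite.exists_min fun x => (P ^ n x) x y
  let N := univ.sup n + 1
  -- The drift of this potential telescopes to `∑ m < N, (P ^ m - 1)`.
  let U : Matrix Y Y ℝ := ∑ m ∈ range N, ∑ k ∈ range m, P ^ k
  have drift (x) : (P *ᵥ (U · y)) x - U x y =
      ∑ m ∈ range N, (P ^ m) x y - N * (if y = x then 1 else 0) := by
    have telescope : (P - 1) * U = ∑ m ∈ range N, (P ^ m - 1) :=
      (Finset.mul_sum ..).trans (sum_congr rfl fun m _ => mul_geom_sum P m)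
    have entry := congrFun₂ telescope x y
    rw [sub_mul, one_mul] at entry
    change (P * U) x y - U x y = _
    simpa [Matrix.sum_apply, Matrix.one_apply, eq_comm] using entry
  refine ⟨(U · y), (P ^ n x₀) x₀ y, N, hn x₀, by positivity, fun x => ?_, fun x => ?_⟩
  · simp only [U, Matrix.sum_apply]
    exact sum_nonneg fun m _ => sum_nonneg fun k _ => Matrix.pow_apply_nonneg hP k x y
  · have reach_le : (P ^ n x) x y ≤ ∑ m ∈ range N, (P ^ m) x y :=
      single_le_sum (f := fun m => (P ^ m) x y) (fun m _ => Matrix.pow_apply_nonneg hP m x y)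
        (mem_range.2 (Nat.lt_succ_of_le (le_sup (mem_univ x))))
    rw [drift]
    linarith [hx₀ x]

section MarkovChain

variable {Ω Y : Type*} {m : MeasurableSpace Ω} {μ : Measure Ω} {ℱ : Filtration ℕ m}
  [Fintype Y] [DecidableEq Y] [MeasurableSpace Y]

/-- `X` is a time-homogeneous Markov chain with transition matrix `P`, relative to a filtration `ℱ`
which may contain more information than the past of `X`. -/
structure IsMarkovChain (P : Matrix Y Y ℝ) (X : ℕ → Ω → Y) (ℱ : Filtration ℕ m)
    (μ : Measure Ω) : Prop where
  stochastic : P ∈ rowStochastic ℝ Y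
  adapted : Adapted ℱ X
  condExp_indicator : ∀ t y,
    μ[(X (t + 1) ⁻¹' {y}).indicator (1 : Ω → ℝ) | ℱ t] =ᵐ[μ] fun ω => P (X t ω) y

/-- The fluctuation of `G t (X (t + 1))` around its conditional mean at time `t`, for a Markov
chain `X` with transition matrix `P` and random functions `G t` of the state, known at time `t`. -/
def innovation (P : Matrix Y Y ℝ) (X : ℕ → Ω → Y) (G : ℕ → Ω → Y → ℝ) (t : ℕ) (ω : Ω) : ℝ :=
  G t ω (X (t + 1) ω) - (P *ᵥ G t ω) (X t ω)

lemma measurable_eval_of_countable {Z W : Type*} [Countable Z] [MeasurableSpace Z]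
    [MeasurableSingletonClass Z] {_ : MeasurableSpace W} {F : W → Z → ℝ} {g : W → Z}
    (hF : Measurable F) (hg : Measurable g) : Measurable fun w => F w (g w) :=
  (measurable_from_prod_countable_left (f := fun x : (Z → ℝ) × Z => x.1 x.2)
    measurable_pi_apply).comp (hF.prodMk hg)

namespace IsMarkovChain

variable {P : Matrix Y Y ℝ} {X : ℕ → Ω → Y} {G : ℕ → Ω → Y → ℝ} {B : ℝ}

lemma abs_innovation_le (hX : IsMarkovChain P X ℱ μ) (hB : ∀ t ω y, |G t ω y| ≤ B)
    (t : ℕ) (ω : Ω) : |innovation P X G t ω| ≤ 2 * B := by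
  have hPG := abs_mulVec_le hX.stochastic (hB t ω) (X t ω)
  calc |innovation P X G t ω| ≤ |G t ω (X (t + 1) ω)| + |(P *ᵥ G t ω) (X t ω)| := abs_sub _ _
    _ ≤ 2 * B := by linarith [hB t ω (X (t + 1) ω)]

variable [MeasurableSingletonClass Y]

lemma measurable_mulVec (hX : IsMarkovChain P X ℱ μ) (hG : Adapted ℱ G) (t : ℕ) :
    Measurable[ℱ t] fun ω => (P *ᵥ G t ω) (X t ω) := by
  have entry_measurable (x : Y) : Measurable[ℱ t] fun ω => (P *ᵥ G t ω) x :=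
    Finset.measurable_sum (m := ℱ t) _ fun y _ =>
      ((measurable_pi_apply y).comp (hG t)).const_mul _
  exact measurable_eval_of_countable (@measurable_pi_lambda _ _ _ (ℱ t) _ _ entry_measurable)
    (hX.adapted t)

lemma stronglyMeasurable_innovation (hX : IsMarkovChain P X ℱ μ) (hG : Adapted ℱ G) (t : ℕ) :
    StronglyMeasurable[ℱ (t + 1)] (innovation P X G t) := by
  have hmono : ℱ t ≤ ℱ (t + 1) := ℱ.mono t.le_succ
  have next := measurable_eval_of_countable ((hG t).mono hmono le_rfl) (hX.adapted (t + 1))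
  exact (next.sub ((hX.measurable_mulVec hG t).mono hmono le_rfl)).stronglyMeasurable

variable [IsFiniteMeasure μ]

lemma condExp_eval_next (hX : IsMarkovChain P X ℱ μ) (hG : Adapted ℱ G)
    (hB : ∀ t ω y, |G t ω y| ≤ B) (t : ℕ) :
    μ[fun ω => G t ω (X (t + 1) ω) | ℱ t] =ᵐ[μ] fun ω => (P *ᵥ G t ω) (X t ω) := by
  let hit (y : Y) : Ω → ℝ := (X (t + 1) ⁻¹' {y}).indicator 1
  let value (y : Y) : Ω → ℝ := fun ω => G t ω y
  have hit_integrable (y) : Integrable (hit y) μ :=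
    (integrable_const (1 : ℝ)).indicator
      (((hX.adapted (t + 1)).mono (ℱ.le _) le_rfl) (measurableSet_singleton y))
  have value_measurable (y) : StronglyMeasurable[ℱ t] (value y) :=
    ((measurable_pi_apply y).comp (hG t)).stronglyMeasurable
  have product_integrable (y) : Integrable (value y * hit y) μ :=
    (hit_integrable y).bdd_mul (c := B) ((value_measurable y).mono (ℱ.le t)).aestronglyMeasurable
      (Eventually.of_forall fun ω => hB t ω y)
  have decompose : (fun ω => G t ω (X (t + 1) ω)) = ∑ y, value y * hit y := by
    ext ω
    simp [hit, value, Set.indicator]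
  have condExp_product (y) : μ[value y * hit y | ℱ t] =ᵐ[μ] fun ω => G t ω y * P (X t ω) y := by
    filter_upwards [condExp_mul_of_stronglyMeasurable_left (value_measurable y)
      (product_integrable y) (hit_integrable y), hX.condExp_indicator t y] with ω hpull hmarkov
    rw [hpull, Pi.mul_apply, hmarkov]
  rw [decompose]
  filter_upwards [condExp_finsetSum (s := univ) (fun y _ => product_integrable y) (ℱ t),
    eventually_all.2 condExp_product] with ω hsum hprod
  simp only [hsum, Finset.sum_apply, hprod, mulVec, dotProduct, mul_comm]

lemma condExp_innovation (hX : IsMarkovChain P X ℱ μ) (hG : Adapted ℱ G)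
    (hB : ∀ t ω y, |G t ω y| ≤ B) (t : ℕ) : μ[innovation P X G t | ℱ t] =ᵐ[μ] 0 := by
  have mean_measurable := hX.measurable_mulVec hG t
  have mean_integrable : Integrable (fun ω => (P *ᵥ G t ω) (X t ω)) μ :=
    Integrable.of_bound (mean_measurable.mono (ℱ.le t) le_rfl).aestronglyMeasurable B
      (Eventually.of_forall fun ω => abs_mulVec_le hX.stochastic (hB t ω) _)
  have next_integrable : Integrable (fun ω => G t ω (X (t + 1) ω)) μ :=
    Integrable.of_bound (measurable_eval_of_countable ((hG t).mono (ℱ.le t) le_rfl)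
      ((hX.adapted (t + 1)).mono (ℱ.le _) le_rfl)).aestronglyMeasurable B
      (Eventually.of_forall fun ω => hB t ω _)
  filter_upwards [condExp_sub next_integrable mean_integrable (ℱ t),
    hX.condExp_eval_next hG hB t] with ω hsub hnext
  have mean_fixed :=
    condExp_of_stronglyMeasurable (ℱ.le t) mean_measurable.stronglyMeasurable mean_integrable
  exact hsub.trans (by rw [Pi.sub_apply, hnext, mean_fixed, sub_self, Pi.zero_apply])

lemma ae_exists_tendsto_sum_innovation (hX : IsMarkovChain P X ℱ μ) (hG : Adapted ℱ G)
    (hB : ∀ t ω y, |G t ω y| ≤ B) {α : ℕ → ℝ} (hα : Summable fun t => α t ^ 2) :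
    ∀ᵐ ω ∂μ, ∃ l,
      Tendsto (fun n => ∑ t ∈ range n, α t * innovation P X G t ω) atTop (nhds l) := by
  let scaled (t : ℕ) : Ω → ℝ := α t • innovation P X G t
  have scaled_measurable (t) : StronglyMeasurable[ℱ (t + 1)] (scaled t) :=
    (hX.stronglyMeasurable_innovation hG t).const_smul _
  have scaled_memLp (t) : MemLp (scaled t) 2 μ :=
    (MemLp.of_bound ((hX.stronglyMeasurable_innovation hG t).mono (ℱ.le _)).aestronglyMeasurable
      (2 * B) (Eventually.of_forall (hX.abs_innovation_le hB t))).const_smul _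
  have scaled_condExp (t) : μ[scaled t | ℱ t] =ᵐ[μ] 0 := by
    filter_upwards [condExp_smul (μ := μ) (α t) (innovation P X G t) (ℱ t),
      hX.condExp_innovation hG hB t] with ω hsmul hzero
    rw [hsmul, Pi.smul_apply, hzero, Pi.zero_apply, smul_zero]
  have scaled_sq_le (t ω) : scaled t ω ^ 2 ≤ α t ^ 2 * (2 * B) ^ 2 := by
    simp only [scaled, Pi.smul_apply, smul_eq_mul, mul_pow (α t)]
    exact mul_le_mul_of_nonneg_left
      (sq_le_sq.2 ((hX.abs_innovation_le hB t ω).trans (le_abs_self _))) (sq_nonneg _)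
  have integral_scaled_sq_le (t) :
      ∫ ω, scaled t ω ^ 2 ∂μ ≤ μ.real Set.univ * (α t ^ 2 * (2 * B) ^ 2) := by
    rw [← smul_eq_mul, ← integral_const]
    exact integral_mono (scaled_memLp t).integrable_sq (integrable_const _) (scaled_sq_le t)
  exact ae_exists_tendsto_sum_of_condExp_eq_zero scaled_measurable scaled_memLp scaled_condExp <|
    ((hα.mul_right _).mul_left _).of_nonneg_of_le
      (fun t => integral_nonneg fun ω => sq_nonneg _) integral_scaled_sq_le

lemma ae_tendsto_sum_visits (hX : IsMarkovChain P X ℱ μ) {y : Y}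
    (hy : ∀ x, ∃ n, 0 < (P ^ n) x y) {α : ℕ → ℝ} (hα : IsRobbinsMonro α) :
    ∀ᵐ ω ∂μ,
      Tendsto (fun n => ∑ t ∈ range n, α t * (if y = X t ω then 1 else 0)) atTop atTop := by
  obtain ⟨V, δ, K, hδ, hK, hV0, drift⟩ :=
    exists_drift_function (fun _ _ => nonneg_of_mem_rowStochastic hX.stochastic) hy
  have V_mem (x) : V x ∈ Set.Icc 0 ‖V‖ := ⟨hV0 x, (le_abs_self _).trans (norm_le_pi_norm V x)⟩
  let ξ := innovation P X fun _ _ => V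
  filter_upwards [hX.ae_exists_tendsto_sum_innovation (G := fun _ _ => V)
    (fun _ => measurable_const) (fun _ _ => norm_le_pi_norm V) hα.summable_sq] with ω ⟨l, hl⟩
  let visits (n : ℕ) : ℝ := ∑ t ∈ range n, α t * (if y = X t ω then 1 else 0)
  have step (t) : α t * δ + α t * ξ t ω - α t * (V (X (t + 1) ω) - V (X t ω)) ≤
      K * (α t * (if y = X t ω then 1 else 0)) := by
    have := mul_le_mul_of_nonneg_left (drift (X t ω)) (hα.nonneg t)
    simp only [ξ, innovation]
    linarith
  have visits_ge (n) :
      (∑ t ∈ range n, α t) * δ + (∑ t ∈ range n, α t * ξ t ω - α 0 * ‖V‖) ≤ K * visits n := by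
    have summed := sum_le_sum fun t (_ : t ∈ range n) => step t
    rw [sum_sub_distrib, sum_add_distrib, ← sum_mul, ← mul_sum] at summed
    linarith [sum_mul_sub_le_of_antitone hα.nonneg hα.antitone (fun t => V_mem (X t ω)) n]
  refine (tendsto_const_mul_atTop_of_pos hK).1 (tendsto_atTop_mono visits_ge ?_)
  exact (hα.tendsto_sum.atTop_mul_const hδ).atTop_add (hl.sub_const _)

end IsMarkovChain

end MarkovChain

/-! ### The canonical Markov chain on trajectories -/

lemma ae_eq_condExp_comap_of_fiberwise {Ω Z : Type*} {m : MeasurableSpace Ω} {μ : Measure Ω}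
    [IsFiniteMeasure μ] [Finite Z] [MeasurableSpace Z] [MeasurableSingletonClass Z] {R : Ω → Z}
    (hR : Measurable R) {f g : Ω → ℝ} (hf : Integrable f μ) (hg : Integrable g μ)
    (hgR : StronglyMeasurable[MeasurableSpace.comap R inferInstance] g)
    (hfg : ∀ ω, ∫ x in R ⁻¹' {R ω}, f x ∂μ = ∫ x in R ⁻¹' {R ω}, g x ∂μ) :
    g =ᵐ[μ] μ[f | MeasurableSpace.comap R inferInstance] := by
  refine ae_eq_condExp_of_forall_setIntegral_eq hR.comap_le hf (fun _ _ _ => hg.integrableOn) ?_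
    hgR.aestronglyMeasurable
  rintro _ ⟨T, -, rfl⟩ -
  have fibers : R ⁻¹' T = ⋃ z ∈ T.toFinite.toFinset, R ⁻¹' {z} := by
    ext ω
    simp
  have fiber_measurable (z) : MeasurableSet (R ⁻¹' {z}) := hR (measurableSet_singleton z)
  have fiber_disjoint : (T.toFinite.toFinset : Set Z).PairwiseDisjoint fun z => R ⁻¹' {z} :=
    fun z _ z' _ hz => Disjoint.preimage R (Set.disjoint_singleton.2 hz)
  rw [fibers, integral_biUnion_finset _ (fun z _ => fiber_measurable z) fiber_disjoint
      (fun z _ => hg.integrableOn), integral_biUnion_finset _ (fun z _ => fiber_measurable z)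
      fiber_disjoint (fun z _ => hf.integrableOn)]
  refine sum_congr rfl fun z _ => ?_
  rcases (R ⁻¹' {z}).eq_empty_or_nonempty with hz | ⟨ω, rfl⟩
  · simp [hz]
  · exact (hfg ω).symm

section Trajectory

variable {Y : Type*} {P : Matrix Y Y ℝ} {ι : Y → ℝ} [MeasurableSpace Y] {μ : Measure (ℕ → Y)}

lemma measureReal_cylinder_inter_next (hP : ∀ y y', 0 ≤ P y y') (hι : ∀ y, 0 ≤ ι y)
    (hμ : ∀ (n : ℕ) (ys : ℕ → Y), μ {ω | ∀ i ≤ n, ω i = ys i} =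
      ENNReal.ofReal (ι (ys 0) * ∏ i ∈ range n, P (ys i) (ys (i + 1))))
    (t : ℕ) (ω : ℕ → Y) (y : Y) :
    μ.real ({x : ℕ → Y | ∀ i ≤ t, x i = ω i} ∩ ((· (t + 1)) ⁻¹' {y})) =
      μ.real {x : ℕ → Y | ∀ i ≤ t, x i = ω i} * P (ω t) y := by
  let ω' := Function.update ω (t + 1) y
  have ω'_past (i) (hi : i ≤ t) : ω' i = ω i :=
    Function.update_of_ne (Nat.lt_succ_of_le hi).ne _ _
  have ω'_next : ω' (t + 1) = y := Function.update_self ..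
  have extend : {x : ℕ → Y | ∀ i ≤ t, x i = ω i} ∩ ((· (t + 1)) ⁻¹' {y}) =
      {x : ℕ → Y | ∀ i ≤ t + 1, x i = ω' i} := by
    ext x
    simp +contextual only [Set.mem_inter_iff, Set.mem_preimage, Set.mem_singleton_iff,
      Set.mem_ofPred_eq, Nat.le_succ_iff_eq_or_le, forall_eq_or_imp, ω'_next, ω'_past, and_comm]
  have cylinder_measureReal (n : ℕ) (ys : ℕ → Y) : μ.real {x : ℕ → Y | ∀ i ≤ n, x i = ys i} =
      ι (ys 0) * ∏ i ∈ range n, P (ys i) (ys (i + 1)) := by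
    rw [Measure.real, hμ, ENNReal.toReal_ofReal]
    exact mul_nonneg (hι _) (prod_nonneg fun _ _ => hP _ _)
  have past_prod : ∏ i ∈ range t, P (ω' i) (ω' (i + 1)) = ∏ i ∈ range t, P (ω i) (ω (i + 1)) :=
    prod_congr rfl fun i hi => by
      rw [ω'_past i (mem_range.1 hi).le, ω'_past (i + 1) (mem_range.1 hi)]
  rw [extend, cylinder_measureReal, cylinder_measureReal, prod_range_succ, past_prod, ω'_next,
    ω'_past 0 t.zero_le, ω'_past t le_rfl, mul_assoc]

variable [MeasurableSingletonClass Y]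

lemma measurableSet_cylinder (t : ℕ) (ω : ℕ → Y) :
    MeasurableSet {x : ℕ → Y | ∀ i ≤ t, x i = ω i} := by
  simp only [Set.ofPred_forall]
  exact .iInter fun i => .iInter fun _ => measurable_pi_apply i (measurableSet_singleton _)

lemma setIntegral_cylinder_indicator_next (hP : ∀ y y', 0 ≤ P y y') (hι : ∀ y, 0 ≤ ι y)
    (hμ : ∀ (n : ℕ) (ys : ℕ → Y), μ {ω | ∀ i ≤ n, ω i = ys i} =
      ENNReal.ofReal (ι (ys 0) * ∏ i ∈ range n, P (ys i) (ys (i + 1))))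
    (t : ℕ) (ω : ℕ → Y) (y : Y) :
    ∫ x in {x : ℕ → Y | ∀ i ≤ t, x i = ω i}, ((· (t + 1)) ⁻¹' {y} : Set (ℕ → Y)).indicator 1 x ∂μ =
      ∫ x in {x : ℕ → Y | ∀ i ≤ t, x i = ω i}, P (x t) y ∂μ := by
  have next_measurable : MeasurableSet ((· (t + 1)) ⁻¹' {y} : Set (ℕ → Y)) :=
    measurable_pi_apply (t + 1) (measurableSet_singleton y)
  have transition_const : ∫ x in {x : ℕ → Y | ∀ i ≤ t, x i = ω i}, P (x t) y ∂μ =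
      ∫ _ in {x : ℕ → Y | ∀ i ≤ t, x i = ω i}, P (ω t) y ∂μ :=
    setIntegral_congr_fun (measurableSet_cylinder t ω) fun x hx => by rw [hx t le_rfl]
  rw [transition_const, setIntegral_const, integral_indicator_one next_measurable,
    measureReal_restrict_apply next_measurable, Set.inter_comm,
    measureReal_cylinder_inter_next hP hι hμ, smul_eq_mul]

theorem isMarkovChain_eval [Fintype Y] [DecidableEq Y] [IsFiniteMeasure μ]
    (hP : P ∈ rowStochastic ℝ Y) (hι : ∀ y, 0 ≤ ι y)
    (hμ : ∀ (n : ℕ) (ys : ℕ → Y), μ {ω | ∀ i ≤ n, ω i = ys i} =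
      ENNReal.ofReal (ι (ys 0) * ∏ i ∈ range n, P (ys i) (ys (i + 1)))) :
    IsMarkovChain P (fun t ω => ω t) (Filtration.piLE (X := fun _ : ℕ => Y)) μ := by
  have eval_measurable (t : ℕ) :
      Measurable[Filtration.piLE (X := fun _ : ℕ => Y) t] fun ω : ℕ → Y => ω t := by
    rw [Filtration.piLE_eq_comap_frestrictLe]
    exact (measurable_pi_apply (X := fun _ : Iic t => Y) ⟨t, mem_Iic.2 le_rfl⟩).comp
      (comap_measurable _)
  have hP0 (y y') : 0 ≤ P y y' := nonneg_of_mem_rowStochastic hP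
  refine ⟨hP, eval_measurable, fun t y => EventuallyEq.symm ?_⟩
  have transition_measurable : StronglyMeasurable[Filtration.piLE (X := fun _ : ℕ => Y) t]
      fun ω : ℕ → Y => P (ω t) y :=
    ((measurable_of_finite fun x => P x y).comp (eval_measurable t)).stronglyMeasurable
  have transition_integrable : Integrable (fun ω : ℕ → Y => P (ω t) y) μ :=
    Integrable.of_bound (transition_measurable.mono (Filtration.piLE.le t)).aestronglyMeasurable 1
      (Eventually.of_forall fun ω => by
        rw [Real.norm_of_nonneg (hP0 _ _)]
        exact le_one_of_mem_rowStochastic hP)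
  have next_integrable :
      Integrable (((fun ω : ℕ → Y => ω (t + 1)) ⁻¹' {y}).indicator (1 : (ℕ → Y) → ℝ)) μ :=
    (integrable_const 1).indicator (measurable_pi_apply (t + 1) (measurableSet_singleton y))
  have fiber (ω : ℕ → Y) : Preorder.frestrictLe (π := fun _ => Y) t ⁻¹'
      {Preorder.frestrictLe t ω} = {x : ℕ → Y | ∀ i ≤ t, x i = ω i} := by
    ext x
    simp [funext_iff]
  rw [Filtration.piLE_eq_comap_frestrictLe] at transition_measurable ⊢
  refine ae_eq_condExp_comap_of_fiberwise (Preorder.measurable_frestrictLe t) next_integrable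
    transition_integrable transition_measurable fun ω => ?_
  rw [fiber]
  exact setIntegral_cylinder_indicator_next hP0 hι hμ t ω y

end Trajectory

/-! ### Q-learning -/

section QLearning

variable {S A Ω : Type*}

/-- The value `max_a q (s, a)` of acting greedily with respect to `q` in the state `s`. -/
noncomputable def greedyValue (q : S × A → ℝ) (s : S) : ℝ := ⨆ a, q (s, a)

lemma measurable_greedyValue [Countable A] :
    Measurable (greedyValue : (S × A → ℝ) → S → ℝ) :=
  measurable_pi_lambda _ fun s => .iSup fun a => measurable_pi_apply (s, a)

lemma abs_greedyValue_sub_le [Fintype S] [Fintype A] (q q' : S × A → ℝ) (s : S) :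
    |greedyValue q s - greedyValue q' s| ≤ ‖q - q'‖ :=
  (abs_iSup_sub_iSup_le_norm_sub _ _).trans <|
    (pi_norm_le_iff_of_nonneg (norm_nonneg _)).2 fun a => norm_le_pi_norm (q - q') (s, a)

lemma abs_greedyValue_le [Fintype S] [Fintype A] (q : S × A → ℝ) (s : S) :
    |greedyValue q s| ≤ ‖q‖ := by
  simpa [greedyValue] using abs_greedyValue_sub_le q 0 s

lemma norm_bellmanOpt_sub_le [Fintype S] [Fintype A] {r : S × A → ℝ} {p : S × A → S → ℝ}
    {γ : ℝ} (hp0 : ∀ y s, 0 ≤ p y s) (hp1 : ∀ y, ∑ s, p y s = 1) (hγ0 : 0 ≤ γ)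
    (q q' : S × A → ℝ) :
    ‖bellmanOpt r p γ q - bellmanOpt r p γ q'‖ ≤ γ * ‖q - q'‖ := by
  refine (pi_norm_le_iff_of_nonneg (mul_nonneg hγ0 (norm_nonneg _))).2 fun y => ?_
  have difference : (bellmanOpt r p γ q - bellmanOpt r p γ q') y =
      γ * ∑ s, p y s * (greedyValue q s - greedyValue q' s) := by
    simp only [bellmanOpt, greedyValue, Pi.sub_apply, mul_sub, sum_sub_distrib]
    ring
  rw [difference, norm_mul, Real.norm_of_nonneg hγ0]
  exact mul_le_mul_of_nonneg_left
    (abs_sum_mul_le_of_sum_eq_one (hp0 y) (hp1 y) (abs_greedyValue_sub_le q q')) hγ0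

lemma mem_rowStochastic_mul_policy [Fintype S] [Fintype A] [DecidableEq S] [DecidableEq A]
    {p : S × A → S → ℝ} (hp0 : ∀ y s, 0 ≤ p y s) (hp1 : ∀ y, ∑ s, p y s = 1) {π : S → A → ℝ}
    (hπ0 : ∀ s a, 0 ≤ π s a) (hπ1 : ∀ s, ∑ a, π s a = 1) :
    (fun y y' => p y y'.1 * π y'.1 y'.2 : Matrix (S × A) (S × A) ℝ) ∈ rowStochastic ℝ (S × A) := by
  refine mem_rowStochastic_iff_sum.2 ⟨fun y y' => mul_nonneg (hp0 y _) (hπ0 _ _), fun y => ?_⟩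
  simp_rw [Fintype.sum_prod_type, ← Finset.mul_sum, hπ1, mul_one, hp1]

variable [DecidableEq S] [DecidableEq A] {r : S × A → ℝ} {γ : ℝ} {α : ℕ → ℝ}
  {X : ℕ → Ω → S × A} {q₀ : S × A → ℝ} {q : ℕ → Ω → S × A → ℝ}

/-- The Q-learning iterates `q` with reward `r`, discount `γ`, step sizes `α` and initial value
`q₀`, driven by the state-action process `X`. -/
structure IsQLearning (r : S × A → ℝ) (γ : ℝ) (α : ℕ → ℝ) (X : ℕ → Ω → S × A)
    (q₀ : S × A → ℝ) (q : ℕ → Ω → S × A → ℝ) : Prop where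
  zero : ∀ ω, q 0 ω = q₀
  succ : ∀ t ω y, q (t + 1) ω y = q t ω y +
    α t * (r (X t ω) + γ * (⨆ b, q t ω ((X (t + 1) ω).1, b)) - q t ω (X t ω))
      * (if y = X t ω then 1 else 0)

/-- The part of the Q-learning target for the pair `y` at time `t` which depends on the next
state-action pair `y'`; it is switched off while `y` is not being visited. -/
noncomputable def sampledValue (γ : ℝ) (X : ℕ → Ω → S × A) (q : ℕ → Ω → S × A → ℝ) (y : S × A)
    (t : ℕ) (ω : Ω) (y' : S × A) : ℝ :=
  if y = X t ω then γ * greedyValue (q t ω) y'.1 else 0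

section Adapted

variable [Countable A] [MeasurableSpace S] [MeasurableSpace A]
  [MeasurableSingletonClass S] [MeasurableSingletonClass A] {m : MeasurableSpace Ω}
  {ℱ : Filtration ℕ m}

lemma IsQLearning.adapted [Countable S] (hq : IsQLearning r γ α X q₀ q) (hX : Adapted ℱ X) :
    Adapted ℱ q := by
  intro t
  induction t with
  | zero =>
    rw [funext hq.zero]
    exact measurable_const
  | succ t ih =>
    have hmono : ℱ t ≤ ℱ (t + 1) := ℱ.mono t.le_succ
    have current_q := ih.mono hmono le_rfl
    have current_X := (hX t).mono hmono le_rfl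
    have next_value := measurable_eval_of_countable (measurable_greedyValue.comp current_q)
      (measurable_fst.comp (hX (t + 1)))
    have temporal_difference := (((measurable_of_countable r).comp current_X).add
      (next_value.const_mul γ)).sub (measurable_eval_of_countable current_q current_X)
    refine (@measurable_pi_iff _ _ _ (ℱ (t + 1)) _ _).2 fun y => ?_
    simp only [hq.succ]
    exact ((measurable_pi_apply y).comp current_q).add ((temporal_difference.const_mul (α t)).mul
      ((measurable_of_countable fun x => if y = x then (1 : ℝ) else 0).comp current_X))

lemma adapted_sampledValue (hX : Adapted ℱ X) (hq : Adapted ℱ q) (y : S × A) :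
    Adapted ℱ (sampledValue γ X q y) := by
  intro t
  have visit_measurable : MeasurableSet[ℱ t] {ω | y = X t ω} := by
    convert hX t (measurableSet_singleton y) using 1
    ext ω
    exact eq_comm
  refine (@measurable_pi_iff _ _ _ (ℱ t) _ _).2 fun y' => ?_
  exact .ite visit_measurable (((measurable_pi_apply y'.1).comp
    (measurable_greedyValue.comp (hq t))).const_mul γ) measurable_const

end Adapted

variable [Fintype S] [Fintype A]

lemma abs_sampledValue_le {C : ℝ} (hγ0 : 0 ≤ γ) (hC : ∀ t ω, ‖q t ω‖ ≤ C) (y : S × A) (t : ℕ)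
    (ω : Ω) (y' : S × A) : |sampledValue γ X q y t ω y'| ≤ γ * C := by
  have value_le : |greedyValue (q t ω) y'.1| ≤ C := (abs_greedyValue_le _ _).trans (hC t ω)
  rw [sampledValue]
  split_ifs
  · rw [abs_mul, abs_of_nonneg hγ0]
    exact mul_le_mul_of_nonneg_left value_le hγ0
  · rw [abs_zero]
    exact mul_nonneg hγ0 ((abs_nonneg _).trans value_le)

namespace IsQLearning

lemma norm_le (hq : IsQLearning r γ α X q₀ q) (hα : ∀ t, α t ∈ Set.Icc 0 1) (hγ0 : 0 ≤ γ)
    {C : ℝ} (hq₀ : ‖q₀‖ ≤ C) (hC : ‖r‖ + γ * C ≤ C) (t : ℕ) (ω : Ω) : ‖q t ω‖ ≤ C := by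
  induction t with
  | zero => rwa [hq.zero]
  | succ t ih =>
    refine (pi_norm_le_iff_of_nonneg ((norm_nonneg _).trans hq₀)).2 fun y => ?_
    have current_le : |q t ω y| ≤ C := (norm_le_pi_norm _ y).trans ih
    rw [hq.succ, Real.norm_eq_abs]
    split_ifs with hy
    · set target := r (X t ω) + γ * ⨆ b, q t ω ((X (t + 1) ω).1, b)
      have target_le : |target| ≤ C :=
        calc |target| ≤ |r (X t ω)| + γ * |greedyValue (q t ω) (X (t + 1) ω).1| := by
              refine (abs_add_le _ _).trans_eq ?_
              rw [abs_mul, abs_of_nonneg hγ0, greedyValue]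
          _ ≤ ‖r‖ + γ * C := by
              gcongr
              · exact norm_le_pi_norm r _
              · exact (abs_greedyValue_le _ _).trans ih
          _ ≤ C := hC
      calc |q t ω y + α t * (target - q t ω (X t ω)) * 1|
          = |(1 - α t) * q t ω y + α t * target| := by rw [← hy]; ring_nf
        _ ≤ (1 - α t) * |q t ω y| + α t * |target| := abs_convexComb_le (hα t) _ _
        _ ≤ (1 - α t) * C + α t * C := add_le_add
            (mul_le_mul_of_nonneg_left current_le (sub_nonneg.2 (hα t).2))
            (mul_le_mul_of_nonneg_left target_le (hα t).1)
        _ = C := by ring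
    · simpa using current_le

lemma exists_norm_le (hq : IsQLearning r γ α X q₀ q) (hα : ∀ t, α t ∈ Set.Icc 0 1)
    (hγ0 : 0 ≤ γ) (hγ1 : γ < 1) : ∃ C, ∀ t ω, ‖q t ω‖ ≤ C := by
  have h1γ : 0 < 1 - γ := sub_pos.2 hγ1
  have hr : 0 ≤ ‖r‖ / (1 - γ) := div_nonneg (norm_nonneg r) h1γ.le
  refine ⟨‖q₀‖ + ‖r‖ / (1 - γ), hq.norm_le hα hγ0 (le_add_of_nonneg_right hr) ?_⟩
  have cancel : (1 - γ) * (‖r‖ / (1 - γ)) = ‖r‖ := mul_div_cancel₀ _ h1γ.ne'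
  linarith [mul_nonneg h1γ.le (norm_nonneg q₀)]

lemma succ_sub_eq (hq : IsQLearning r γ α X q₀ q) {p : S × A → S → ℝ}
    {P : Matrix (S × A) (S × A) ℝ} (hPp : ∀ y s, ∑ a, P y (s, a) = p y s) {qstar : S × A → ℝ}
    (hqstar : bellmanOpt r p γ qstar = qstar) (t : ℕ) (ω : Ω) (y : S × A) :
    (q (t + 1) ω - qstar) y =
      (1 - α t * (if y = X t ω then 1 else 0)) * (q t ω - qstar) y +
      α t * (if y = X t ω then 1 else 0) *
        (bellmanOpt r p γ (q t ω) - bellmanOpt r p γ qstar) y +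
      α t * innovation P X (sampledValue γ X q y) t ω := by
  have marginal (x : S × A) (v : S → ℝ) :
      (P *ᵥ fun y' => γ * v y'.1) x = γ * ∑ s, p x s * v s := by
    simp only [mulVec, dotProduct, Fintype.sum_prod_type, ← sum_mul, hPp, Finset.mul_sum]
    exact sum_congr rfl fun s _ => mul_left_comm _ _ _
  rw [hqstar, Pi.sub_apply, hq.succ, innovation]
  by_cases hy : y = X t ω
  · subst hy
    have sampled : sampledValue γ X q (X t ω) t ω = fun y' => γ * greedyValue (q t ω) y'.1 := by
      ext y'
      exact if_pos rfl
    rw [sampled, marginal]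
    simp only [↓reduceIte, Pi.sub_apply, bellmanOpt, greedyValue]
    ring
  · have no_innovation : sampledValue γ X q y t ω = 0 := by
      ext y'
      simp [sampledValue, hy]
    simp [no_innovation, hy]

end IsQLearning

theorem ae_tendsto_of_QLearning_markov_general {m : MeasurableSpace Ω} {ℱ : Filtration ℕ m}
    {μ : Measure Ω} [IsFiniteMeasure μ]
    [MeasurableSpace S] [MeasurableSingletonClass S]
    [MeasurableSpace A] [MeasurableSingletonClass A]
    (hγ0 : 0 ≤ γ) (hγ1 : γ < 1) {p : S × A → S → ℝ} {qstar : S × A → ℝ}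
    (hqstar : bellmanOpt r p γ qstar = qstar)
    {P : Matrix (S × A) (S × A) ℝ} (hPp : ∀ y s, ∑ a, P y (s, a) = p y s)
    (hirr : ∀ y y', ∃ n, 0 < (P ^ n) y y') (hX : IsMarkovChain P X ℱ μ)
    (hα : IsRobbinsMonro α) (hq : IsQLearning r γ α X q₀ q) :
    ∀ᵐ ω ∂μ, Tendsto (fun t => q t ω) atTop (nhds qstar) := by
  have hα01 (t) : α t ∈ Set.Icc 0 1 := ⟨hα.nonneg t, hα.le_one t⟩
  have hp0 (y s) : 0 ≤ p y s := by
    rw [← hPp]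
    exact sum_nonneg fun _ _ => nonneg_of_mem_rowStochastic hX.stochastic
  have hp1 (y) : ∑ s, p y s = 1 := by
    simp_rw [← hPp, ← Fintype.sum_prod_type, sum_row_of_mem_rowStochastic hX.stochastic]
  obtain ⟨C, hC⟩ := hq.exists_norm_le hα01 hγ0 hγ1
  have noise_converges (y) := hX.ae_exists_tendsto_sum_innovation
    (adapted_sampledValue hX.adapted (hq.adapted hX.adapted) y)
    (abs_sampledValue_le hγ0 hC y) hα.summable_sq
  have visits_diverge (y) := hX.ae_tendsto_sum_visits (hirr · y) hα
  filter_upwards [ae_all_iff.2 noise_converges, ae_all_iff.2 visits_diverge] with ω hnoise hvisits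
  refine tendsto_sub_nhds_zero_iff.1 <| tendsto_zero_of_async_contraction hγ0 hγ1 (fun t y => ?_)
    hvisits hnoise (fun t => norm_bellmanOpt_sub_le hp0 hp1 hγ0 (q t ω) qstar)
    (fun t y => hq.succ_sub_eq hPp hqstar t ω y)
    (fun t => (norm_sub_le _ _).trans (add_le_add_left (hC t ω) _))
  split_ifs
  · simpa using hα01 t
  · simp

end QLearning

/-- Almost sure convergence of Q-learning with Markovian samples: on the trajectory
space of the chain `{(S_t, A_t)}` induced by a fixed behavior policy `π` (with the
trajectory measure given by the Ionescu–Tulcea theorem, characterized here via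
cylinder probabilities), the Q-learning iterates with step sizes `α_t = 1/(t+2)^ν`,
`ν ∈ (2/3, 1)`, converge almost surely to the optimal action-value function `q*`. -/
theorem ae_tendsto_of_QLearning_markov
    [DecidableEq S] [DecidableEq A]
    [MeasurableSpace S] [MeasurableSingletonClass S]
    [MeasurableSpace A] [MeasurableSingletonClass A]
    -- the MDP
    (r : S × A → ℝ) (p : S × A → S → ℝ)
    (hpnonneg : ∀ y s', 0 ≤ p y s') (hpsum : ∀ y, ∑ s', p y s' = 1)
    (γ : ℝ) (hγ0 : 0 ≤ γ) (hγ1 : γ < 1)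
    -- the optimal action-value function
    (qstar : S × A → ℝ) (hqstar : bellmanOpt r p γ qstar = qstar)
    -- the behavior policy and the induced chain on S × A
    (π : S → A → ℝ) (hπnonneg : ∀ s a, 0 ≤ π s a) (hπsum : ∀ s, ∑ a, π s a = 1)
    (Pind : Matrix (S × A) (S × A) ℝ)
    (hPind : Pind = fun y y' => p y y'.1 * π y'.1 y'.2)
    (hirr : ∀ y y', ∃ n : ℕ, 0 < (Pind ^ n) y y')
    (haper : ∀ y, ∀ e : ℕ, (∀ n ∈ returnTimes Pind y, e ∣ n) → e = 1)
    -- step sizes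
    (ν : ℝ) (hν : ν ∈ Set.Ioo (2 / 3 : ℝ) 1)
    (α : ℕ → ℝ) (hα : α = fun t : ℕ => 1 / ((t : ℝ) + 2) ^ ν)
    -- the trajectory measure, characterized by its cylinder probabilities
    (ι : S × A → ℝ) (hιnonneg : ∀ y, 0 ≤ ι y) (hιsum : ∑ y, ι y = 1)
    (μ : Measure (ℕ → S × A)) [IsProbabilityMeasure μ]
    (hμ : ∀ (n : ℕ) (ys : ℕ → S × A),
      μ {ω | ∀ i ≤ n, ω i = ys i} =
        ENNReal.ofReal (ι (ys 0) * ∏ i ∈ Finset.range n, Pind (ys i) (ys (i + 1))))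
    -- the Q-learning iterates
    (q₀ : S × A → ℝ) (q : ℕ → (ℕ → S × A) → (S × A → ℝ))
    (hq0 : ∀ ω, q 0 ω = q₀)
    (hqstep : ∀ t ω y, q (t + 1) ω y = q t ω y +
      α t * (r (ω t) + γ * (⨆ b, q t ω ((ω (t + 1)).1, b)) - q t ω (ω t))
        * (if y = ω t then 1 else 0)) :
    ∀ᵐ ω ∂μ, Tendsto (fun t => q t ω) atTop (nhds qstar) := by
  subst hPind hα
  have chain := isMarkovChain_eval (mem_rowStochastic_mul_policy hpnonneg hpsum hπnonneg hπsum)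
    hιnonneg hμ
  have marginal (y s) : ∑ a, p y s * π s a = p y s := by rw [← Finset.mul_sum, hπsum, mul_one]
  have steps := isRobbinsMonro_one_div_rpow ⟨by linarith [hν.1], hν.2.le⟩ one_le_two
  exact ae_tendsto_of_QLearning_markov_general hγ0 hγ1 hqstar marginal hirr chain steps
    ⟨hq0, hqstep⟩
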